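/- Let Γ be a distance-regular graph of diameter D ≥ 2 and valency k on n vertices, let q be a nonzero real number, and let θ ≠ k be an eigenvalue of the adjacency matrix of Γ with standard sequence (u_i)_{i=0}^D. Let F = Σ_{i=0}^D u_i A_i, where A_i is the distance-i matrix of Γ (F is a positive scalar multiple of the primitive idempotent E of θ). Then θ is of classical q-type if and only if the q-distance matrix 𝔻_q of Γ lies in the real linear span of the all-ones matrix J and F. -/

import Mathlib

/-- `G` is a distance-regular graph of diameter `D` with intersection numbers
`p h i j = p^h_{ij}`: for any two vertices `x, y` at distance `h`, the number of
vertices `z` with `d(x,z) = i` and `d(y,z) = j` equals `p h i j`. -/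
structure IsDRG {V : Type*} [Fintype V] (G : SimpleGraph V) (D : ℕ)
    (p : ℕ → ℕ → ℕ → ℕ) : Prop where
  connected : G.Connected
  dist_le : ∀ x y : V, G.dist x y ≤ D
  exists_dist_eq : ∃ x y : V, G.dist x y = D
  inter : ∀ h i j : ℕ, h ≤ D → i ≤ D → j ≤ D → ∀ x y : V, G.dist x y = h →
    {z : V | G.dist x z = i ∧ G.dist y z = j}.ncard = p h i j

/-- `u` is the standard sequence of `θ` for a distance-regular graph with
intersection numbers `p` (so valency `k = b₀ = p 0 1 1`, `cᵢ = p i 1 (i-1)`,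
`aᵢ = p i 1 i`, `bᵢ = p i 1 (i+1)`). -/
def IsStdSeq (D : ℕ) (p : ℕ → ℕ → ℕ → ℕ) (θ : ℝ) (u : ℕ → ℝ) : Prop :=
  u 0 = 1 ∧ u 1 = θ / (p 0 1 1 : ℝ) ∧
    ∀ i : ℕ, 1 ≤ i → i ≤ D - 1 →
      (p i 1 (i - 1) : ℝ) * u (i - 1) + (p i 1 i : ℝ) * u i
          + (p i 1 (i + 1) : ℝ) * u (i + 1) = θ * u i

/-- The sequence `u` (a standard sequence) is of classical `q`-type:
`u i = (1/q) * u (i-1) + c` for `i = 1, …, D`, for some real `c`. -/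
def IsClassicalQType (D : ℕ) (q : ℝ) (u : ℕ → ℝ) : Prop :=
  ∃ c : ℝ, ∀ i : ℕ, 1 ≤ i → i ≤ D → u i = (1 / q) * u (i - 1) + c

/-- `θ` is an eigenvalue of the adjacency matrix of `G`. -/
def IsAdjEigenval {V : Type*} [Fintype V] (G : SimpleGraph V) [DecidableRel G.Adj]
    (θ : ℝ) : Prop :=
  ∃ v : V → ℝ, v ≠ 0 ∧ (G.adjMatrix ℝ).mulVec v = θ • v

/-- The `q`-distance matrix of a graph `G`: the `(x,y)` entry is
`∑_{j=0}^{d(x,y)-1} q^{-j}` (and `0` on the diagonal, since `d(x,x) = 0`). -/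
noncomputable def qDistMatrix {V : Type*} [Fintype V] (G : SimpleGraph V) (q : ℝ) :
    Matrix V V ℝ :=
  Matrix.of fun x y => ∑ j ∈ Finset.range (G.dist x y), (1 / q) ^ j

/-- The distance-`i` matrix of `G`: the `(x,y)` entry is `1` iff `d(x,y) = i`. -/
noncomputable def distMatrix {V : Type*} [Fintype V] (G : SimpleGraph V) (i : ℕ) : Matrix V V ℝ :=
  Matrix.of fun x y => if G.dist x y = i then 1 else 0

theorem exists_dist_eq_of_le {V : Type*} [Fintype V] (G : SimpleGraph V) (D : ℕ)
    (p : ℕ → ℕ → ℕ → ℕ) (h : IsDRG G D p) (i : ℕ) (hi : i ≤ D) :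
    ∃ x y : V, G.dist x y = i := by
  obtain ⟨x, y, hxy⟩ := h.exists_dist_eq
  obtain ⟨w, hw⟩ := h.connected.exists_walk_length_eq_dist x y
  refine ⟨x, w.getVert i, ?_⟩
  have h1 := SimpleGraph.dist_le (w.take i)
  have h2 := SimpleGraph.dist_le (w.drop i)
  have h3 := h.connected.dist_triangle (u := x) (v := w.getVert i) (w := y)
  rw [SimpleGraph.Walk.take_length] at h1
  rw [SimpleGraph.Walk.drop_length] at h2
  omega

/-- Let `θ ≠ k` be an eigenvalue of a distance-regular graph `Γ` of diameter `D ≥ 2`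
with standard sequence `(u_i)` and let `F = ∑_{i=0}^D u_i A_i`. Then `θ` is of classical
`q`-type iff the `q`-distance matrix lies in the span of the all-ones matrix `J` and `F`. -/
theorem stmt5 {V : Type*} [Fintype V] (G : SimpleGraph V) [DecidableRel G.Adj]
    (D : ℕ) (p : ℕ → ℕ → ℕ → ℕ) (hdrg : IsDRG G D p) (hD : 2 ≤ D)
    (q : ℝ) (hq : q ≠ 0)
    (θ : ℝ) (hθ : IsAdjEigenval G θ) (hθk : θ ≠ (p 0 1 1 : ℝ))
    (u : ℕ → ℝ) (hu : IsStdSeq D p θ u) :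
    IsClassicalQType D q u ↔
      qDistMatrix G q ∈ Submodule.span ℝ
        ({Matrix.of fun _ _ => (1 : ℝ),
          ∑ i ∈ Finset.range (D + 1), u i • distMatrix G i} : Set (Matrix V V ℝ)) := by
  classical
  obtain ⟨hu0, hu1, -⟩ := hu
  have hne : u 1 - 1 ≠ 0 := by
    rw [hu1]
    by_cases hk : (p 0 1 1 : ℝ) = 0
    · simp [hk]
    · intro h
      apply hθk
      have h' : θ / (p 0 1 1 : ℝ) = 1 := by linarith
      rwa [div_eq_one_iff_eq hk] at h'
  have hF : ∀ x y : V, (∑ i ∈ Finset.range (D + 1), u i • distMatrix G i) x y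
      = u (G.dist x y) := by
    intro x y
    have hle := hdrg.dist_le x y
    rw [Matrix.sum_apply]
    simp only [distMatrix, Matrix.smul_apply, Matrix.of_apply, smul_eq_mul, mul_ite, mul_one,
      mul_zero]
    rw [Finset.sum_ite_eq]
    simp [Nat.lt_succ_of_le hle]
  have hS : ∀ i : ℕ, ∑ j ∈ Finset.range (i + 1), (1 / q) ^ j
      = (1 / q) * ∑ j ∈ Finset.range i, (1 / q) ^ j + 1 := by
    intro i
    rw [Finset.sum_range_succ', Finset.mul_sum, pow_zero]
    simp only [pow_succ']
  rw [Submodule.mem_span_pair]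
  constructor
  · rintro ⟨c, hc⟩
    have key : ∀ i : ℕ, i ≤ D →
        u i = 1 + (u 1 - 1) * ∑ j ∈ Finset.range i, (1 / q) ^ j := by
      intro i
      induction i with
      | zero => intro _; simp [hu0]
      | succ n ih =>
        intro hn
        have e1 := hc (n + 1) (by omega) hn
        have e2 := hc 1 le_rfl (by omega)
        have e3 := ih (by omega)
        simp only [Nat.add_sub_cancel, Nat.sub_self, hu0] at e1 e2
        rw [hS, e1, e3]
        linear_combination -e2
    refine ⟨-(u 1 - 1)⁻¹, (u 1 - 1)⁻¹, ?_⟩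
    ext x y
    rw [Matrix.add_apply, Matrix.smul_apply, Matrix.smul_apply, hF,
      key _ (hdrg.dist_le x y)]
    simp only [qDistMatrix, Matrix.of_apply, smul_eq_mul]
    field_simp
    ring
  · rintro ⟨a, b, hab⟩
    have key : ∀ i : ℕ, i ≤ D → a + b * u i = ∑ j ∈ Finset.range i, (1 / q) ^ j := by
      intro i hi
      obtain ⟨x, y, hxy⟩ := exists_dist_eq_of_le G D p hdrg i hi
      have h := congrFun (congrFun hab x) y
      rw [Matrix.add_apply, Matrix.smul_apply, Matrix.smul_apply, hF, hxy] at h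
      simpa only [qDistMatrix, Matrix.of_apply, smul_eq_mul, hxy, mul_one] using h
    have hb : b ≠ 0 := by
      rintro rfl
      have h0 := key 0 (by omega)
      have h1 := key 1 (by omega)
      simp at h0 h1
      linarith
    refine ⟨((1 / q) * a + 1 - a) / b, ?_⟩
    intro i hi hiD
    obtain ⟨n, rfl⟩ : ∃ n, i = n + 1 := ⟨i - 1, by omega⟩
    have e1 := key (n + 1) hiD
    have e2 := key n (by omega)
    rw [hS, ← e2] at e1
    rw [Nat.add_sub_cancel]
    apply mul_left_cancel₀ hb
    rw [mul_add, mul_div_cancel₀ _ hb]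
    linear_combination e1
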